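/- Assume that the undirected graph on {1,…,N} with an edge {i,j} whenever a(i,j) > 0 is connected, that for every i the local matrix Qi = Fiᵀ·Pi + Pi·Fi is negative semidefinite, and that k3i ≠ 0 for every i. Then the closed-loop microgrid matrix 𝐅 is Hurwitz: every complex eigenvalue of 𝐅 has strictly negative real part (equivalently, the origin of the linear system ẋ = 𝐅x is asymptotically stable). -/

import Mathlib

open Matrix

/-- The 3×3 matrix with `(1,1)` entry equal to `1` and all other entries zero. -/
noncomputable def E11 : Matrix (Fin 3) (Fin 3) ℝ := !![1, 0, 0; 0, 0, 0; 0, 0, 0]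


lemma local_facts (σ p22 p23 p33 α β γ : ℝ) (hσ : 0 < σ) (h22 : 0 < p22) (h33 : 0 < p33)
    (hγ : γ ≠ 0)
    (h : ∀ v w z : ℝ, v * (σ * w) + w * ((p22 * α - p23) * v + p22 * β * w + p22 * γ * z)
      + z * ((p23 * α - p33) * v + p23 * β * w + p23 * γ * z) ≤ 0) :
    p22 * α = p23 - σ ∧ p23 * α = p33 ∧ β < 0 ∧ p22 * γ = p23 * β := by
  have h1 : p22 * α - p23 + σ = 0 := by
    by_contra hA
    have := h ((1 - p22 * β) / (p22 * α - p23 + σ)) 1 0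
    have e : (1 - p22 * β) / (p22 * α - p23 + σ) * (p22 * α - p23 + σ) = 1 - p22 * β := by
      field_simp
    nlinarith
  have h2 : p23 * α - p33 = 0 := by
    by_contra hA
    have := h ((1 - p23 * γ) / (p23 * α - p33)) 0 1
    have e : (1 - p23 * γ) / (p23 * α - p33) * (p23 * α - p33) = 1 - p23 * γ := by
      field_simp
    nlinarith
  have hf : ∀ w z : ℝ, p22 * β * w ^ 2 + (p22 * γ + p23 * β) * (w * z) + p23 * γ * z ^ 2 ≤ 0 := by
    intro w z
    have := h 0 w z
    linarith
  have hb : p22 * β ≤ 0 := by have := hf 1 0; linarith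
  have hb' : β ≤ 0 := by
    by_contra hh
    push Not at hh
    have := mul_pos h22 hh
    linarith
  have hb2 : β ≠ 0 := by
    intro h0
    subst h0
    have := hf ((1 - p23 * γ) / (p22 * γ)) 1
    have e : (1 - p23 * γ) / (p22 * γ) * (p22 * γ) = 1 - p23 * γ := by
      have := h22.ne'
      field_simp
    nlinarith
  have hb3 : β < 0 := lt_of_le_of_ne hb' hb2
  refine ⟨by linarith, by linarith, hb3, ?_⟩
  have h4 := hf (p22 * γ + p23 * β) (-2 * (p22 * β))
  have h5 : (-(p22 * β)) * (p22 * γ - p23 * β) ^ 2 ≤ 0 := by nlinarith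
  have h6 : 0 < -(p22 * β) := by nlinarith
  have h7 : (p22 * γ - p23 * β) ^ 2 ≤ 0 := by
    by_contra hh
    push Not at hh
    have := mul_pos h6 hh
    linarith
  have h8 : p22 * γ - p23 * β = 0 := by
    have := sq_nonneg (p22 * γ - p23 * β)
    exact pow_eq_zero_iff (two_ne_zero) |>.1 (le_antisymm h7 this)
  linarith

lemma lap_sum {N : ℕ} (a : Fin N → Fin N → ℝ) (hs : ∀ i j, a i j = a j i) (v : Fin N → ℝ) :
    ∑ i, ∑ j, a i j * (v j - v i) * v i = - (1/2) * ∑ i, ∑ j, a i j * (v i - v j) ^ 2 := by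
  have h : ∑ i, ∑ j, a i j * (v j - v i) * v i = ∑ i, ∑ j, a i j * (v i - v j) * v j := by
    rw [Finset.sum_comm]
    refine Finset.sum_congr rfl fun i _ => Finset.sum_congr rfl fun j _ => ?_
    rw [hs]
  have h2 : ∑ i, ∑ j, a i j * (v j - v i) * v i + ∑ i, ∑ j, a i j * (v i - v j) * v j
      = - ∑ i, ∑ j, a i j * (v i - v j) ^ 2 := by
    simp only [← Finset.sum_add_distrib, ← Finset.sum_neg_distrib]
    refine Finset.sum_congr rfl fun i _ => Finset.sum_congr rfl fun j _ => ?_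
    ring
  linarith

/-- Final step at a node: an uncoupled eigenvector in the kernel of `Q` vanishes. -/
lemma node_zero (σ p22 p23 c α β γ : ℝ) (hσ : 0 < σ) (hc : 0 < c) (hγ : γ ≠ 0) (hβ : β < 0)
    (h1 : p22 * α = p23 - σ) (h2 : p22 * γ = p23 * β) (μ v w z : ℂ)
    (e1 : μ * v = c * w) (e2 : μ * w = α * v + β * w + γ * z) (e3 : μ * z = - v)
    (e4 : (β : ℂ) * w + γ * z = 0) : v = 0 ∧ w = 0 ∧ z = 0 := by
  have hc' : (c : ℂ) ≠ 0 := by exact_mod_cast hc.ne'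
  have hγ' : (γ : ℂ) ≠ 0 := by exact_mod_cast hγ
  have hβ' : (β : ℂ) ≠ 0 := by exact_mod_cast hβ.ne
  have hσ' : (σ : ℂ) ≠ 0 := by exact_mod_cast hσ.ne'
  have h1' : (p22 : ℂ) * α = p23 - σ := by exact_mod_cast h1
  have h2' : (p22 : ℂ) * γ = p23 * β := by exact_mod_cast h2
  have hv : v = 0 := by
    have h : (β : ℂ) * σ * v = 0 := by
      linear_combination (-p22 * μ) * e4 + p22 * β * e2 + p22 * γ * e3 + p22 * β * e4
        + β * v * h1' - v * h2'
    simpa [hβ', hσ'] using h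
  subst hv
  have hw : w = 0 := by
    have : (c : ℂ) * w = 0 := by rw [← e1]; simp
    simpa [hc'] using this
  subst hw
  have hz : z = 0 := by simpa [hγ'] using e4
  exact ⟨rfl, rfl, hz⟩

/-- If the electrical graph (with an edge `{i,j}` whenever `a i j > 0`) is
connected, each local matrix `Qᵢ = Fᵢᵀ·Pᵢ + Pᵢ·Fᵢ` is negative semidefinite
(with structured positive definite `Pᵢ` satisfying `ηᵢ = σ̄·Ctᵢ`, `σ̄ > 0`), and
`k3ᵢ ≠ 0` for every `i`, then the closed-loop microgrid matrix `𝐅` is Hurwitz: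
every complex eigenvalue of `𝐅` has strictly negative real part. -/
theorem closed_loop_hurwitz
    (N : ℕ) (hN : 1 ≤ N)
    (Rt Lt Ct k1 k2 k3 : Fin N → ℝ)
    (hRt : ∀ i, 0 < Rt i) (hLt : ∀ i, 0 < Lt i) (hCt : ∀ i, 0 < Ct i)
    (F : Fin N → Matrix (Fin 3) (Fin 3) ℝ)
    (hF : ∀ i, F i = !![0, 1/Ct i, 0;
                        (k1 i - 1)/Lt i, (k2 i - Rt i)/Lt i, k3 i/Lt i;
                        -1, 0, 0])
    (a : Fin N → Fin N → ℝ)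
    (ha_symm : ∀ i j, a i j = a j i)
    (ha_nonneg : ∀ i j, 0 ≤ a i j)
    (ha_diag : ∀ i, a i i = 0)
    (hconn : (SimpleGraph.fromRel (fun i j : Fin N => 0 < a i j)).Connected)
    (σ : ℝ) (hσ : 0 < σ)
    (η p22 p23 p33 : Fin N → ℝ)
    (hη : ∀ i, η i = σ * Ct i)
    (P : Fin N → Matrix (Fin 3) (Fin 3) ℝ)
    (hP : ∀ i, P i = !![η i, 0, 0; 0, p22 i, p23 i; 0, p23 i, p33 i])
    (hPpd : ∀ i, (P i).PosDef)
    (hQ : ∀ i, ∀ v : Fin 3 → ℝ, v ⬝ᵥ ((F i)ᵀ * P i + P i * F i).mulVec v ≤ 0)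
    (hk3 : ∀ i, k3 i ≠ 0)
    (bigF : Matrix (Fin N × Fin 3) (Fin N × Fin 3) ℝ)
    (hbigF : ∀ p q : Fin N × Fin 3, bigF p q =
      if p.1 = q.1 then (F p.1 - (∑ l, a p.1 l / Ct p.1) • E11) p.2 q.2
      else ((a p.1 q.1 / Ct p.1) • E11) p.2 q.2) :
    ∀ μ : ℂ, μ ∈ spectrum ℂ (bigF.map (Complex.ofReal : ℝ → ℂ)) → μ.re < 0 := by
  intro μ hμ
  by_contra hre
  push Not at hre
  -- eigenvector
  obtain ⟨x, hx0, hx⟩ : ∃ x : Fin N × Fin 3 → ℂ, x ≠ 0 ∧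
      (bigF.map (Complex.ofReal : ℝ → ℂ)).mulVec x = μ • x := by
    rw [← Matrix.spectrum_toLin', ← Module.End.hasEigenvalue_iff_mem_spectrum] at hμ
    obtain ⟨x, hx⟩ := hμ.exists_hasEigenvector
    exact ⟨x, hx.2, by simpa using hx.apply_eq_smul⟩
  have hrow : ∀ i k, μ * x (i, k) = ∑ l, (F i k l : ℂ) * x (i, l)
      + ∑ j, ((a i j / Ct i : ℝ) : ℂ) * ((E11 k 0 : ℝ) : ℂ) * (x (j, 0) - x (i, 0)) := by
    intro i k
    have h := congrFun hx (i, k)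
    simp only [Pi.smul_apply, smul_eq_mul] at h
    rw [← h]
    simp only [Matrix.mulVec, dotProduct, Fintype.sum_prod_type, Matrix.map_apply, hbigF]
    have hj : ∀ j, ∑ l, (((if i = j then (F i - (∑ l, a i l / Ct i) • E11) k l
        else ((a i j / Ct i) • E11) k l : ℝ)) : ℂ) * x (j, l)
        = (if i = j then ∑ l, (F i k l : ℂ) * x (i, l)
            - ((∑ l, a i l / Ct i : ℝ) : ℂ) * (E11 k 0 : ℝ) * x (i, 0) else 0)
          + ((a i j / Ct i : ℝ) : ℂ) * (E11 k 0 : ℝ) * x (j, 0) := by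
      intro j
      by_cases hij : i = j
      · subst hij
        simp only [if_true, ha_diag, Fin.sum_univ_three, Matrix.sub_apply, Matrix.smul_apply]
        fin_cases k <;> simp [E11] <;> ring
      · simp only [if_neg hij, Fin.sum_univ_three, Matrix.smul_apply]
        fin_cases k <;> simp [E11]
    rw [Finset.sum_congr rfl fun j _ => hj j, Finset.sum_add_distrib]
    simp only [Finset.sum_ite_eq, Finset.mem_univ, if_true, mul_sub, Finset.sum_sub_distrib,
      Complex.ofReal_sum, Finset.sum_mul]
    ring
  have r1 : ∀ i, μ * x (i, 0) = ((1 / Ct i : ℝ) : ℂ) * x (i, 1)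
      + ∑ j, ((a i j / Ct i : ℝ) : ℂ) * (x (j, 0) - x (i, 0)) := by
    intro i
    have := hrow i 0
    simpa [hF, E11, Fin.sum_univ_three] using this
  have r2 : ∀ i, μ * x (i, 1) = (((k1 i - 1) / Lt i : ℝ) : ℂ) * x (i, 0)
      + (((k2 i - Rt i) / Lt i : ℝ) : ℂ) * x (i, 1) + ((k3 i / Lt i : ℝ) : ℂ) * x (i, 2) := by
    intro i
    have := hrow i 1
    simpa [hF, E11, Fin.sum_univ_three] using this
  have r3 : ∀ i, μ * x (i, 2) = - x (i, 0) := by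
    intro i
    have := hrow i 2
    simpa [hF, E11, Fin.sum_univ_three] using this
  clear hrow hx hμ hbigF
  obtain ⟨α, hα⟩ : ∃ α : Fin N → ℝ, ∀ i, (k1 i - 1) / Lt i = α i := ⟨_, fun _ => rfl⟩
  obtain ⟨β, hβ⟩ : ∃ β : Fin N → ℝ, ∀ i, (k2 i - Rt i) / Lt i = β i := ⟨_, fun _ => rfl⟩
  obtain ⟨γ, hγ⟩ : ∃ γ : Fin N → ℝ, ∀ i, k3 i / Lt i = γ i := ⟨_, fun _ => rfl⟩
  have hγ0 : ∀ i, γ i ≠ 0 := fun i => by rw [← hγ]; exact div_ne_zero (hk3 i) (hLt i).ne'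
  simp only [hα, hβ, hγ] at hF r2
  have hQ' : ∀ i, ∀ v w z : ℝ, v * (σ * w)
      + w * ((p22 i * α i - p23 i) * v + p22 i * β i * w + p22 i * γ i * z)
      + z * ((p23 i * α i - p33 i) * v + p23 i * β i * w + p23 i * γ i * z) ≤ 0 := by
    intro i v w z
    have h := hQ i ![v, w, z]
    have hC := (hCt i).ne'
    have e : ![v, w, z] ⬝ᵥ ((F i)ᵀ * P i + P i * F i).mulVec ![v, w, z] = 2 * (v * (σ * w)
      + w * ((p22 i * α i - p23 i) * v + p22 i * β i * w + p22 i * γ i * z)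
      + z * ((p23 i * α i - p33 i) * v + p23 i * β i * w + p23 i * γ i * z)) := by
      rw [hF, hP, hη]
      simp [Matrix.mulVec, dotProduct, Fin.sum_univ_three, Matrix.mul_apply]
      field_simp
      ring
    linarith
  have hPf : ∀ i, ∀ v w z : ℝ, ![v, w, z] ⬝ᵥ (P i).mulVec ![v, w, z] =
      σ * Ct i * v ^ 2 + p22 i * w ^ 2 + 2 * p23 i * w * z + p33 i * z ^ 2 := by
    intro i v w z
    rw [hP, hη]
    simp [Matrix.mulVec, dotProduct, Fin.sum_univ_three]
    ring
  have hPn : ∀ i, ∀ v w z : ℝ,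
      0 ≤ σ * Ct i * v ^ 2 + p22 i * w ^ 2 + 2 * p23 i * w * z + p33 i * z ^ 2 := by
    intro i v w z
    rw [← hPf]
    simpa using (hPpd i).posSemidef.dotProduct_mulVec_nonneg ![v, w, z]
  have h22 : ∀ i, 0 < p22 i := by
    intro i
    have := (hPpd i).diag_pos (i := 1)
    simpa [hP] using this
  have h33 : ∀ i, 0 < p33 i := by
    intro i
    have := (hPpd i).diag_pos (i := 2)
    simpa [hP] using this
  have hloc := fun i => local_facts σ (p22 i) (p23 i) (p33 i) (α i) (β i) (γ i) hσ (h22 i)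
    (h33 i) (hγ0 i) (hQ' i)
  -- the energy balance at each node
  have hq : ∀ i, ∀ w z : ℝ, ∀ v : ℝ, v * (σ * w)
      + w * ((p22 i * α i - p23 i) * v + p22 i * β i * w + p22 i * γ i * z)
      + z * ((p23 i * α i - p33 i) * v + p23 i * β i * w + p23 i * γ i * z)
      = p22 i / β i * (β i * w + γ i * z) ^ 2 := by
    intro i w z v
    obtain ⟨l1, l2, l3, l4⟩ := hloc i
    have hb := l3.ne
    field_simp
    linear_combination β i * v * w * l1 + β i * z * v * l2
      - (β i * w * z + γ i * z ^ 2) * l4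
  have hre1 : ∀ i, Ct i * (μ.re * (x (i, 0)).re - μ.im * (x (i, 0)).im) = (x (i, 1)).re
      + ∑ j, a i j * ((x (j, 0)).re - (x (i, 0)).re) := by
    intro i
    have h := congrArg Complex.re (r1 i)
    simp only [Complex.mul_re, Complex.add_re, Complex.re_sum, Complex.ofReal_re,
      Complex.ofReal_im, Complex.sub_re, zero_mul, sub_zero] at h
    rw [h, mul_add, Finset.mul_sum]
    have hC := (hCt i).ne'
    congr 1
    · field_simp
    · refine Finset.sum_congr rfl fun j _ => ?_
      field_simp
  have him1 : ∀ i, Ct i * (μ.re * (x (i, 0)).im + μ.im * (x (i, 0)).re) = (x (i, 1)).im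
      + ∑ j, a i j * ((x (j, 0)).im - (x (i, 0)).im) := by
    intro i
    have h := congrArg Complex.im (r1 i)
    simp only [Complex.mul_im, Complex.add_im, Complex.im_sum, Complex.ofReal_re,
      Complex.ofReal_im, Complex.sub_im, zero_mul, add_zero] at h
    rw [h, mul_add, Finset.mul_sum]
    have hC := (hCt i).ne'
    congr 1
    · field_simp
    · refine Finset.sum_congr rfl fun j _ => ?_
      field_simp
  have hbal : ∀ i, μ.re * ((σ * Ct i * (x (i, 0)).re ^ 2 + p22 i * (x (i, 1)).re ^ 2
        + 2 * p23 i * (x (i, 1)).re * (x (i, 2)).re + p33 i * (x (i, 2)).re ^ 2)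
      + (σ * Ct i * (x (i, 0)).im ^ 2 + p22 i * (x (i, 1)).im ^ 2
        + 2 * p23 i * (x (i, 1)).im * (x (i, 2)).im + p33 i * (x (i, 2)).im ^ 2))
      = p22 i / β i * (β i * (x (i, 1)).re + γ i * (x (i, 2)).re) ^ 2
      + p22 i / β i * (β i * (x (i, 1)).im + γ i * (x (i, 2)).im) ^ 2
      + σ * ∑ j, a i j * ((x (j, 0)).re - (x (i, 0)).re) * (x (i, 0)).re
      + σ * ∑ j, a i j * ((x (j, 0)).im - (x (i, 0)).im) * (x (i, 0)).im := by
    intro i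
    rw [← hq i _ _ (x (i, 0)).re, ← hq i _ _ (x (i, 0)).im, ← Finset.sum_mul, ← Finset.sum_mul]
    have a1 := hre1 i
    have b1 := him1 i
    have a2 := congrArg Complex.re (r2 i)
    have b2 := congrArg Complex.im (r2 i)
    have a3 := congrArg Complex.re (r3 i)
    have b3 := congrArg Complex.im (r3 i)
    simp only [Complex.mul_re, Complex.mul_im, Complex.add_re, Complex.add_im, Complex.ofReal_re,
      Complex.ofReal_im, zero_mul, sub_zero, add_zero, Complex.neg_re, Complex.neg_im]
      at a2 b2 a3 b3
    linear_combination σ * (x (i, 0)).re * a1 + σ * (x (i, 0)).im * b1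
      + (p22 i * (x (i, 1)).re + p23 i * (x (i, 2)).re) * a2
      + (p22 i * (x (i, 1)).im + p23 i * (x (i, 2)).im) * b2
      + (p23 i * (x (i, 1)).re + p33 i * (x (i, 2)).re) * a3
      + (p23 i * (x (i, 1)).im + p33 i * (x (i, 2)).im) * b3
  have hsum := Finset.sum_congr (rfl : (Finset.univ : Finset (Fin N)) = Finset.univ)
    fun i _ => hbal i
  have hL : 0 ≤ ∑ i, μ.re * ((σ * Ct i * (x (i, 0)).re ^ 2 + p22 i * (x (i, 1)).re ^ 2
        + 2 * p23 i * (x (i, 1)).re * (x (i, 2)).re + p33 i * (x (i, 2)).re ^ 2)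
      + (σ * Ct i * (x (i, 0)).im ^ 2 + p22 i * (x (i, 1)).im ^ 2
        + 2 * p23 i * (x (i, 1)).im * (x (i, 2)).im + p33 i * (x (i, 2)).im ^ 2)) :=
    Finset.sum_nonneg fun i _ => mul_nonneg hre (add_nonneg (hPn i _ _ _) (hPn i _ _ _))
  rw [hsum] at hL
  simp only [Finset.sum_add_distrib, ← Finset.mul_sum] at hL
  rw [lap_sum a ha_symm (fun i => (x (i, 0)).re), lap_sum a ha_symm (fun i => (x (i, 0)).im)] at hL
  have hneg : ∀ f : Fin N → ℝ, ∀ i, 0 ≤ -(p22 i / β i * f i ^ 2) := by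
    intro f i
    have : p22 i / β i ≤ 0 := (div_neg_of_pos_of_neg (h22 i) (hloc i).2.2.1).le
    nlinarith [sq_nonneg (f i)]
  have hlapn : ∀ v : Fin N → ℝ, ∀ i, 0 ≤ ∑ j, a i j * (v i - v j) ^ 2 := fun v i =>
    Finset.sum_nonneg fun j _ => mul_nonneg (ha_nonneg i j) (sq_nonneg _)
  have n1 := Finset.sum_nonneg fun i (_ : i ∈ Finset.univ) =>
    hneg (fun i => β i * (x (i, 1)).re + γ i * (x (i, 2)).re) i
  have n2 := Finset.sum_nonneg fun i (_ : i ∈ Finset.univ) =>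
    hneg (fun i => β i * (x (i, 1)).im + γ i * (x (i, 2)).im) i
  have n3 := Finset.sum_nonneg fun i (_ : i ∈ Finset.univ) => hlapn (fun i => (x (i, 0)).re) i
  have n4 := Finset.sum_nonneg fun i (_ : i ∈ Finset.univ) => hlapn (fun i => (x (i, 0)).im) i
  have m3 := mul_nonneg hσ.le n3
  have m4 := mul_nonneg hσ.le n4
  have z1 := (Finset.sum_eq_zero_iff_of_nonneg fun i (_ : i ∈ Finset.univ) =>
    hneg (fun i => β i * (x (i, 1)).re + γ i * (x (i, 2)).re) i).1
    (le_antisymm (by simp only [Finset.sum_neg_distrib] at *; linarith) n1)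
  have z2 := (Finset.sum_eq_zero_iff_of_nonneg fun i (_ : i ∈ Finset.univ) =>
    hneg (fun i => β i * (x (i, 1)).im + γ i * (x (i, 2)).im) i).1
    (le_antisymm (by simp only [Finset.sum_neg_distrib] at *; linarith) n2)
  have hlz : ∀ v : Fin N → ℝ, ∑ i, ∑ j, a i j * (v i - v j) ^ 2 ≤ 0 →
      ∀ i j, a i j * (v j - v i) = 0 := by
    intro v hv i j
    have y1 := (Finset.sum_eq_zero_iff_of_nonneg fun i (_ : i ∈ Finset.univ) => hlapn v i).1
      (le_antisymm hv (Finset.sum_nonneg fun i _ => hlapn v i)) i (Finset.mem_univ i)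
    have y2 := (Finset.sum_eq_zero_iff_of_nonneg fun j (_ : j ∈ Finset.univ) =>
      mul_nonneg (ha_nonneg i j) (sq_nonneg (v i - v j))).1 y1 j (Finset.mem_univ j)
    rcases mul_eq_zero.1 y2 with h | h
    · simp [h]
    · have := pow_eq_zero_iff (two_ne_zero) |>.1 h
      rw [← neg_sub, this]
      simp
  have z3 := hlz (fun i => (x (i, 0)).re) (by
    simp only [Finset.sum_neg_distrib] at n1 n2
    refine nonpos_of_mul_nonpos_right (a := σ) ?_ hσ
    linarith)
  have z4 := hlz (fun i => (x (i, 0)).im) (by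
    simp only [Finset.sum_neg_distrib] at n1 n2
    refine nonpos_of_mul_nonpos_right (a := σ) ?_ hσ
    linarith)
  have hk : ∀ i, ∀ t : ℝ, -(p22 i / β i * t ^ 2) = 0 → t = 0 := by
    intro i t ht
    have h1 : p22 i / β i ≠ 0 := div_ne_zero (h22 i).ne' (hloc i).2.2.1.ne
    simpa [(h22 i).ne', (hloc i).2.2.1.ne] using ht
  have hnode : ∀ i, x (i, 0) = 0 ∧ x (i, 1) = 0 ∧ x (i, 2) = 0 := by
    intro i
    obtain ⟨l1, l2, l3, l4⟩ := hloc i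
    refine node_zero σ (p22 i) (p23 i) (1 / Ct i) (α i) (β i) (γ i) hσ (one_div_pos.2 (hCt i))
      (hγ0 i) l3 l1 l4 μ _ _ _ ?_ (r2 i) (r3 i) ?_
    · rw [r1 i, Finset.sum_eq_zero, add_zero]
      intro j _
      have e : (a i j : ℂ) * (x (j, 0) - x (i, 0)) = 0 := by
        apply Complex.ext
        · simpa using z3 i j
        · simpa using z4 i j
      rw [Complex.ofReal_div, div_mul_eq_mul_div, e, zero_div]
    · apply Complex.ext
      · simpa using hk i _ (z1 i (Finset.mem_univ i))
      · simpa using hk i _ (z2 i (Finset.mem_univ i))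
  apply hx0
  funext ⟨i, k⟩
  obtain ⟨y0, y1, y2⟩ := hnode i
  fin_cases k
  · exact y0
  · exact y1
  · exact y2
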